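/- Let Φ ∈ C^3(I) be an original function, set y_i = Φ(x_i) and d_i = Φ'(x_i), and let Ψ be the rational cubic spline fractal interpolation function and C the classical rational cubic interpolant for this data (with |α_i| ≤ κ a_i, 0 ≤ κ < 1, u_i > 0, v_i ≥ 0). Assume the classical error bound ‖Φ − C‖_∞ ≤ (1/2) ‖Φ^{(3)}‖_∞ max_{1 ≤ i ≤ N−1} {h_i^3 c_i} with constants c_i independent of h_i. Then ‖Φ − Ψ‖_∞ ≤ (1/2) ‖Φ^{(3)}‖_∞ h^3 c + (|α|_∞ / (s(1 − |α|_∞))) { |u|_∞ M + (1/4)[(3|u|_∞ + |v|_∞) M + |u|_∞ (h |d|_∞ + (x_N − x_1) max{|d_1|, |d_N|})] }, where c = max_i c_i, M = |y|_∞ + max{|y_1|, |y_N|}, s = min_i (u_i + v_i/4), |y|_∞ = max_i |y_i|, |d|_∞ = max_i |d_i|, |u|_∞ = max_i u_i, |v|_∞ = max_i v_i, |α|_∞ = max_i |α_i|, and h = max_i h_i. -/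

import Mathlib

/-!
The coefficients of `q_i` are linear in the data, so `q_i = C ∘ L_i - α_i B_i`, where `B_i` is the
rational cubic on all of `I` with shape parameters `u_i`, `v_i` that matches the data at `x_1` and
`x_N`. The functional equation of `Ψ` therefore reads `(Ψ - C) ∘ L_i = α_i (Ψ - B_i)`, and taking
suprema gives `‖Ψ - C‖ ≤ |α|_∞ (‖Ψ - C‖ + ‖C‖ + max_i ‖B_i‖)`, which is solved for `‖Ψ - C‖`. A
rational cubic is a convex combination of its end values plus a slope term, which bounds `C` and
the `B_i`.
-/

section RationalCubic

/-- The rational cubic Hermite interpolant on `[0, 1]` with shape parameters `u`, `v`, end values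
`p`, `r` and end slopes `m`, `n`. Interpolation on an interval of length `h` with end derivatives
`d`, `e` corresponds to the slopes `m = h * d`, `n = h * e`. -/
noncomputable def rationalCubic (u v p r m n θ : ℝ) : ℝ :=
  (u * p * (1 - θ) ^ 3 + ((3 * u + v) * p + u * m) * θ * (1 - θ) ^ 2
    + ((3 * u + v) * r - u * n) * θ ^ 2 * (1 - θ) + u * r * θ ^ 3) / (u + v * θ * (1 - θ))

lemma rationalCubic_sub_mul (u v p r m n c p' r' m' n' θ : ℝ) :
    rationalCubic u v (p - c * p') (r - c * r') (m - c * m') (n - c * n') θ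
      = rationalCubic u v p r m n θ - c * rationalCubic u v p' r' m' n' θ := by
  unfold rationalCubic
  ring

lemma rationalCubic_eq_convexComb_add (u v p r m n θ : ℝ) :
    rationalCubic u v p r m n θ
      = (1 - θ) ^ 2 * (u + (2 * u + v) * θ) / (u + v * θ * (1 - θ)) * p
        + θ ^ 2 * (u + (2 * u + v) * (1 - θ)) / (u + v * θ * (1 - θ)) * r
        + u * (θ * (1 - θ) / (u + v * θ * (1 - θ))) * ((1 - θ) * m + θ * -n) := by
  unfold rationalCubic
  ring

lemma abs_mul_add_mul_le {s t p r Y : ℝ} (hs : 0 ≤ s) (ht : 0 ≤ t) (hst : s + t = 1)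
    (hp : |p| ≤ Y) (hr : |r| ≤ Y) : |s * p + t * r| ≤ Y := by
  simpa using convex_closedBall (0 : ℝ) Y (by simpa using hp) (by simpa using hr) hs ht hst

variable {u v p r m n θ Y E : ℝ}

lemma rationalCubic_denom_pos (hu : 0 < u) (hv : 0 ≤ v) (hθ : θ ∈ Set.Icc (0 : ℝ) 1) :
    0 < u + v * θ * (1 - θ) := by
  have := mul_nonneg (mul_nonneg hv hθ.1) (sub_nonneg.2 hθ.2)
  linarith

-- `w ↦ w / (u + v w)` is increasing, and `w = θ (1 - θ)` is at most `1 / 4`.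
lemma mul_one_sub_div_denom_le (hu : 0 < u) (hv : 0 ≤ v) (hθ : θ ∈ Set.Icc (0 : ℝ) 1) :
    θ * (1 - θ) / (u + v * θ * (1 - θ)) ≤ 1 / 4 / (u + v / 4) := by
  have hw : θ * (1 - θ) ≤ 1 / 4 := by linarith [sq_nonneg (θ - 1 / 2)]
  rw [div_le_div_iff₀ (rationalCubic_denom_pos hu hv hθ) (by positivity)]
  linarith [mul_le_mul_of_nonneg_left hw hu.le]

lemma abs_rationalCubic_le (hu : 0 < u) (hv : 0 ≤ v) (hθ : θ ∈ Set.Icc (0 : ℝ) 1)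
    (hp : |p| ≤ Y) (hr : |r| ≤ Y) (hm : |m| ≤ E) (hn : |n| ≤ E) :
    |rationalCubic u v p r m n θ| ≤ Y + u / (u + v / 4) * (E / 4) := by
  have := rationalCubic_denom_pos hu hv hθ
  have hθ₀ : 0 ≤ θ := hθ.1
  have hθ₁ : 0 ≤ 1 - θ := sub_nonneg.2 hθ.2
  have : 0 ≤ E := (abs_nonneg m).trans hm
  have hvalue := abs_mul_add_mul_le
    (s := (1 - θ) ^ 2 * (u + (2 * u + v) * θ) / (u + v * θ * (1 - θ)))
    (t := θ ^ 2 * (u + (2 * u + v) * (1 - θ)) / (u + v * θ * (1 - θ)))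
    (by positivity) (by positivity) (by field_simp; ring) hp hr
  have hslope : |(1 - θ) * m + θ * -n| ≤ E :=
    abs_mul_add_mul_le hθ₁ hθ₀ (sub_add_cancel 1 θ) hm (by rwa [abs_neg])
  rw [rationalCubic_eq_convexComb_add]
  refine (abs_add_le _ _).trans (add_le_add hvalue ?_)
  calc |u * (θ * (1 - θ) / (u + v * θ * (1 - θ))) * ((1 - θ) * m + θ * -n)|
      = u * (θ * (1 - θ) / (u + v * θ * (1 - θ))) * |(1 - θ) * m + θ * -n| := by
        rw [abs_mul, abs_of_nonneg (by positivity)]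
    _ ≤ u * (1 / 4 / (u + v / 4)) * E := by
        gcongr ?_ * ?_
        exact mul_le_mul_of_nonneg_left (mul_one_sub_div_denom_le hu hv hθ) hu.le
    _ = u / (u + v / 4) * (E / 4) := by ring

lemma abs_rationalCubic_le_of_le {U S : ℝ} (hu : 0 < u) (hv : 0 ≤ v) (huU : u ≤ U) (hS₀ : 0 < S)
    (hS : S ≤ u + v / 4) (hθ : θ ∈ Set.Icc (0 : ℝ) 1)
    (hp : |p| ≤ Y) (hr : |r| ≤ Y) (hm : |m| ≤ E) (hn : |n| ≤ E) :
    |rationalCubic u v p r m n θ| ≤ Y + U / S * (E / 4) := by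
  have hE : 0 ≤ E := (abs_nonneg m).trans hm
  have hU : 0 ≤ U := hu.le.trans huU
  refine (abs_rationalCubic_le hu hv hθ hp hr hm hn).trans ?_
  gcongr

end RationalCubic

lemma exists_mem_Icc_succ {β : Type*} [LinearOrder β] {x : ℕ → β} {m n : ℕ} (hmn : m < n) {t : β}
    (ht : t ∈ Set.Icc (x m) (x n)) :
    ∃ i, m ≤ i ∧ i < n ∧ t ∈ Set.Icc (x i) (x (i + 1)) := by
  induction n, hmn using Nat.le_induction with
  | base => exact ⟨m, le_rfl, m.lt_succ_self, ht⟩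
  | succ n hmn ih =>
    rcases le_total t (x n) with htn | htn
    · obtain ⟨i, hmi, hin, hti⟩ := ih ⟨ht.1, htn⟩
      exact ⟨i, hmi, hin.trans n.lt_succ_self, hti⟩
    · exact ⟨n, Nat.le_of_succ_le hmn, n.lt_succ_self, htn, ht.2⟩

lemma exists_lineMap_eq_of_mem_Icc {a b t : ℝ} (ht : t ∈ Set.Icc a b) :
    ∃ θ ∈ Set.Icc (0 : ℝ) 1, AffineMap.lineMap a b θ = t := by
  rwa [← segment_eq_Icc (ht.1.trans ht.2), segment_eq_image_lineMap] at ht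

lemma lineMap_mem_Icc {a b θ : ℝ} (hab : a ≤ b) (hθ : θ ∈ Set.Icc (0 : ℝ) 1) :
    AffineMap.lineMap a b θ ∈ Set.Icc a b := by
  rw [← segment_eq_Icc hab, segment_eq_image_lineMap]
  exact Set.mem_image_of_mem _ hθ

lemma lineMap_sub_div_sub {a b : ℝ} (hab : a < b) (θ : ℝ) :
    (AffineMap.lineMap a b θ - a) / (b - a) = θ := by
  rw [AffineMap.lineMap_apply_ring', add_sub_cancel_right,
    mul_div_cancel_right₀ _ (sub_pos.2 hab).ne']

lemma div_mul_lineMap_add_div {a b : ℝ} (hab : a < b) (c e θ : ℝ) :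
    (e - c) / (b - a) * AffineMap.lineMap a b θ + (b * c - a * e) / (b - a)
      = AffineMap.lineMap c e θ := by
  have := (sub_pos.2 hab).ne'
  rw [AffineMap.lineMap_apply_ring', AffineMap.lineMap_apply_ring']
  field_simp
  ring

lemma succ_sub_le_of_monotoneOn_Icc {x : ℕ → ℝ} {m n i : ℕ} (hx : MonotoneOn x (Set.Icc m n))
    (hmi : m ≤ i) (hin : i < n) : x (i + 1) - x i ≤ x n - x m := by
  have hmn : m ≤ n := hmi.trans hin.le
  have hleft : x m ≤ x i := hx ⟨le_rfl, hmn⟩ ⟨hmi, hin.le⟩ hmi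
  have hright : x (i + 1) ≤ x n := hx ⟨hmi.trans i.le_succ, hin⟩ ⟨hmn, le_rfl⟩ hin
  exact sub_le_sub hright hleft

lemma lt_one_of_le_mul_div {x : ℕ → ℝ} {m n i : ℕ} {κ b : ℝ} (hx : MonotoneOn x (Set.Icc m n))
    (hmi : m ≤ i) (hin : i < n) (hκ₀ : 0 ≤ κ) (hκ₁ : κ < 1)
    (hb : b ≤ κ * ((x (i + 1) - x i) / (x n - x m))) : b < 1 := by
  have hmn : m ≤ n := hmi.trans hin.le
  have hlength : 0 ≤ x n - x m := sub_nonneg.2 (hx ⟨le_rfl, hmn⟩ ⟨hmn, le_rfl⟩ hmn)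
  have hratio : (x (i + 1) - x i) / (x n - x m) ≤ 1 :=
    div_le_one_of_le₀ (succ_sub_le_of_monotoneOn_Icc hx hmi hin) hlength
  exact hb.trans_lt ((mul_le_of_le_one_right hκ₀ hratio).trans_lt hκ₁)

lemma le_pow_mul_of_exists_eq {m n k : ℕ} {f c : ℕ → ℝ} {P F K : ℝ}
    (hf : ∀ i, m ≤ i → i < n → 0 ≤ f i) (hc : ∀ i, m ≤ i → i < n → 0 ≤ c i)
    (hP : ∃ i, m ≤ i ∧ i < n ∧ P = f i ^ k * c i)
    (hF : ∀ i, m ≤ i → i < n → f i ≤ F) (hK : ∀ i, m ≤ i → i < n → c i ≤ K) :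
    P ≤ F ^ k * K := by
  obtain ⟨i, hi, hin, rfl⟩ := hP
  have hF₀ : 0 ≤ F := (hf i hi hin).trans (hF i hi hin)
  exact mul_le_mul (pow_le_pow_left₀ (hf i hi hin) (hF i hi hin) k) (hK i hi hin) (hc i hi hin)
    (pow_nonneg hF₀ k)

lemma le_div_one_sub_mul_of_forall_exists_le {X : Type*} {s : Set X} {f : X → ℝ} {A K : ℝ}
    (hA₀ : 0 ≤ A) (hA₁ : A < 1) (hf : BddAbove (f '' s))
    (h : ∀ t ∈ s, ∃ t' ∈ s, f t ≤ A * (f t' + K)) {t : X} (ht : t ∈ s) :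
    f t ≤ A / (1 - A) * K := by
  have le_sup {t : X} (ht : t ∈ s) : f t ≤ sSup (f '' s) := le_csSup hf ⟨t, ht, rfl⟩
  have sup_le : sSup (f '' s) ≤ A * (sSup (f '' s) + K) := by
    refine csSup_le ⟨f t, t, ht, rfl⟩ (Set.forall_mem_image.2 fun t ht => ?_)
    obtain ⟨t', ht', hle⟩ := h t ht
    exact hle.trans (by gcongr; exact le_sup ht')
  refine (le_sup ht).trans ?_
  rw [div_mul_eq_mul_div, le_div_iff₀ (sub_pos.2 hA₁)]
  linarith

/-- `Ψ` satisfies the functional equations `Ψ (L_i t) = α_i Ψ t + q_i t` of the rational cubic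
spline fractal interpolation function with nodes `x 1, …, x N`, values `y`, derivatives `d`, shape
parameters `u`, `v` and scaling factors `α`. Both `t` and `L_i t` are parametrized by the same
`θ ∈ [0, 1]`, along `[x 1, x N]` and `[x i, x (i + 1)]`. The classical rational cubic interpolant
is the case `α = 0`. -/
def IsRationalCubicFIF (N : ℕ) (x y d u v α : ℕ → ℝ) (Ψ : ℝ → ℝ) : Prop :=
  ∀ i, 1 ≤ i → i < N → ∀ θ ∈ Set.Icc (0 : ℝ) 1,
    Ψ (AffineMap.lineMap (x i) (x (i + 1)) θ) = α i * Ψ (AffineMap.lineMap (x 1) (x N) θ)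
      + rationalCubic (u i) (v i) (y i - α i * y 1) (y (i + 1) - α i * y N)
          ((x (i + 1) - x i) * d i - α i * ((x N - x 1) * d 1))
          ((x (i + 1) - x i) * d (i + 1) - α i * ((x N - x 1) * d N)) θ

section FractalInterpolation

variable {N : ℕ} {x y d u v α : ℕ → ℝ} {Ψ C : ℝ → ℝ}

lemma isRationalCubicFIF_zero_iff :
    IsRationalCubicFIF N x y d u v 0 C ↔ ∀ i, 1 ≤ i → i < N → ∀ θ ∈ Set.Icc (0 : ℝ) 1,
      C (AffineMap.lineMap (x i) (x (i + 1)) θ)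
        = rationalCubic (u i) (v i) (y i) (y (i + 1))
            ((x (i + 1) - x i) * d i) ((x (i + 1) - x i) * d (i + 1)) θ := by
  simp only [IsRationalCubicFIF, Pi.zero_apply, zero_mul, sub_zero, zero_add]

lemma isRationalCubicFIF_of_forall_mem_Icc (hI : x 1 < x N)
    (h : ∀ i, 1 ≤ i → i < N → ∀ t ∈ Set.Icc (x 1) (x N),
      Ψ ((x (i + 1) - x i) / (x N - x 1) * t + (x N * x i - x 1 * x (i + 1)) / (x N - x 1))
        = α i * Ψ t + rationalCubic (u i) (v i) (y i - α i * y 1) (y (i + 1) - α i * y N)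
          ((x (i + 1) - x i) * d i - α i * ((x N - x 1) * d 1))
          ((x (i + 1) - x i) * d (i + 1) - α i * ((x N - x 1) * d N))
          ((t - x 1) / (x N - x 1))) :
    IsRationalCubicFIF N x y d u v α Ψ := by
  intro i hi hiN θ hθ
  simpa only [div_mul_lineMap_add_div hI, lineMap_sub_div_sub hI]
    using h i hi hiN _ (lineMap_mem_Icc hI.le hθ)

lemma isRationalCubicFIF_zero_of_forall_mem_Icc (hx : ∀ i, 1 ≤ i → i < N → x i < x (i + 1))
    (h : ∀ i, 1 ≤ i → i < N → ∀ t ∈ Set.Icc (x i) (x (i + 1)),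
      C t = rationalCubic (u i) (v i) (y i) (y (i + 1))
        ((x (i + 1) - x i) * d i) ((x (i + 1) - x i) * d (i + 1))
        ((t - x i) / (x (i + 1) - x i))) :
    IsRationalCubicFIF N x y d u v 0 C := by
  refine isRationalCubicFIF_zero_iff.2 fun i hi hiN θ hθ => ?_
  simpa only [lineMap_sub_div_sub (hx i hi hiN)]
    using h i hi hiN _ (lineMap_mem_Icc (hx i hi hiN).le hθ)

lemma IsRationalCubicFIF.sub_lineMap_eq (hΨ : IsRationalCubicFIF N x y d u v α Ψ)
    (hC : IsRationalCubicFIF N x y d u v 0 C) {i : ℕ} (hi : 1 ≤ i) (hiN : i < N) {θ : ℝ}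
    (hθ : θ ∈ Set.Icc (0 : ℝ) 1) :
    Ψ (AffineMap.lineMap (x i) (x (i + 1)) θ) - C (AffineMap.lineMap (x i) (x (i + 1)) θ)
      = α i * (Ψ (AffineMap.lineMap (x 1) (x N) θ)
        - rationalCubic (u i) (v i) (y 1) (y N) ((x N - x 1) * d 1) ((x N - x 1) * d N) θ) := by
  rw [hΨ i hi hiN θ hθ, isRationalCubicFIF_zero_iff.1 hC i hi hiN θ hθ, rationalCubic_sub_mul]
  ring

variable {A Y D U S H : ℝ}

lemma IsRationalCubicFIF.abs_classical_le (hN : 1 < N) (hC : IsRationalCubicFIF N x y d u v 0 C)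
    (hu : ∀ i, 1 ≤ i → i < N → 0 < u i) (hv : ∀ i, 1 ≤ i → i < N → 0 ≤ v i)
    (hY : ∀ i, 1 ≤ i → i ≤ N → |y i| ≤ Y) (hD : ∀ i, 1 ≤ i → i ≤ N → |d i| ≤ D)
    (hU : ∀ i, 1 ≤ i → i < N → u i ≤ U) (hH : ∀ i, 1 ≤ i → i < N → x (i + 1) - x i ≤ H)
    (hS₀ : 0 < S) (hS : ∀ i, 1 ≤ i → i < N → S ≤ u i + v i / 4)
    {t : ℝ} (ht : t ∈ Set.Icc (x 1) (x N)) :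
    |C t| ≤ Y + U / S * (H * D / 4) := by
  obtain ⟨i, hi, hiN, hti⟩ := exists_mem_Icc_succ hN ht
  obtain ⟨θ, hθ, rfl⟩ := exists_lineMap_eq_of_mem_Icc hti
  have hh : 0 ≤ x (i + 1) - x i := sub_nonneg.2 (hti.1.trans hti.2)
  have hslope {e : ℝ} (he : |e| ≤ D) : |(x (i + 1) - x i) * e| ≤ H * D := by
    rw [abs_mul, abs_of_nonneg hh]
    exact mul_le_mul (hH i hi hiN) he (abs_nonneg e) (hh.trans (hH i hi hiN))
  rw [isRationalCubicFIF_zero_iff.1 hC i hi hiN θ hθ]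
  exact abs_rationalCubic_le_of_le (hu i hi hiN) (hv i hi hiN) (hU i hi hiN) hS₀ (hS i hi hiN) hθ
    (hY i hi hiN.le) (hY (i + 1) (by omega) hiN) (hslope (hD i hi hiN.le))
    (hslope (hD (i + 1) (by omega) hiN))

theorem IsRationalCubicFIF.abs_sub_classical_le (hN : 1 < N)
    (hΨ : IsRationalCubicFIF N x y d u v α Ψ)
    (hΨ_bdd : BddAbove ((fun t => |Ψ t|) '' Set.Icc (x 1) (x N)))
    (hC : IsRationalCubicFIF N x y d u v 0 C)
    (hu : ∀ i, 1 ≤ i → i < N → 0 < u i) (hv : ∀ i, 1 ≤ i → i < N → 0 ≤ v i)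
    (hα : ∀ i, 1 ≤ i → i < N → |α i| ≤ A) (hA : A < 1)
    (hY : ∀ i, 1 ≤ i → i ≤ N → |y i| ≤ Y) (hD : ∀ i, 1 ≤ i → i ≤ N → |d i| ≤ D)
    (hU : ∀ i, 1 ≤ i → i < N → u i ≤ U) (hH : ∀ i, 1 ≤ i → i < N → x (i + 1) - x i ≤ H)
    (hS₀ : 0 < S) (hS : ∀ i, 1 ≤ i → i < N → S ≤ u i + v i / 4)
    {t : ℝ} (ht : t ∈ Set.Icc (x 1) (x N)) :
    |Ψ t - C t| ≤ A / (1 - A) * (Y + max |y 1| |y N|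
      + U / S * ((H * D + (x N - x 1) * max |d 1| |d N|) / 4)) := by
  have hA₀ : 0 ≤ A := (abs_nonneg _).trans (hα 1 le_rfl hN)
  have hI : x 1 ≤ x N := ht.1.trans ht.2
  have hC_le {s : ℝ} (hs : s ∈ Set.Icc (x 1) (x N)) : |C s| ≤ Y + U / S * (H * D / 4) :=
    hC.abs_classical_le hN hu hv hY hD hU hH hS₀ hS hs
  obtain ⟨B, hB⟩ := hΨ_bdd
  refine le_div_one_sub_mul_of_forall_exists_le (f := fun t => |Ψ t - C t|) hA₀ hA
    ⟨B + (Y + U / S * (H * D / 4)), Set.forall_mem_image.2 fun s hs =>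
      (abs_sub _ _).trans (add_le_add (hB ⟨s, hs, rfl⟩) (hC_le hs))⟩ (fun s hs => ?_) ht
  obtain ⟨i, hi, hiN, hsi⟩ := exists_mem_Icc_succ hN hs
  obtain ⟨θ, hθ, rfl⟩ := exists_lineMap_eq_of_mem_Icc hsi
  have hs' := lineMap_mem_Icc hI hθ
  have hslope {e : ℝ} (he : |e| ≤ max |d 1| |d N|) :
      |(x N - x 1) * e| ≤ (x N - x 1) * max |d 1| |d N| := by
    rw [abs_mul, abs_of_nonneg (sub_nonneg.2 hI)]
    exact mul_le_mul_of_nonneg_left he (sub_nonneg.2 hI)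
  set s' := AffineMap.lineMap (x 1) (x N) θ
  set b := rationalCubic (u i) (v i) (y 1) (y N) ((x N - x 1) * d 1) ((x N - x 1) * d N) θ
  have hb : |b| ≤ max |y 1| |y N| + U / S * ((x N - x 1) * max |d 1| |d N| / 4) :=
    abs_rationalCubic_le_of_le (hu i hi hiN) (hv i hi hiN) (hU i hi hiN) hS₀ (hS i hi hiN) hθ
      (le_max_left _ _) (le_max_right _ _) (hslope (le_max_left _ _)) (hslope (le_max_right _ _))
  refine ⟨s', hs', ?_⟩
  rw [hΨ.sub_lineMap_eq hC hi hiN hθ, abs_mul]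
  refine mul_le_mul (hα i hi hiN) ?_ (abs_nonneg _) hA₀
  calc |Ψ s' - b| ≤ |Ψ s' - C s'| + |C s' - b| := abs_sub_le _ _ _
    _ ≤ |Ψ s' - C s'| + (|C s'| + |b|) := by gcongr; exact abs_sub _ _
    _ ≤ _ := by linarith [hC_le hs']

end FractalInterpolation

lemma div_mul_add_div_mul_le {A S U V M E : ℝ} (hA₀ : 0 ≤ A) (hA₁ : A < 1) (hS₀ : 0 < S)
    (hSU : S ≤ U + (3 * U + V) / 4) (hM : 0 ≤ M) :
    A / (1 - A) * (M + U / S * (E / 4))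
      ≤ A / (S * (1 - A)) * (U * M + 1 / 4 * ((3 * U + V) * M + U * E)) := by
  have hA : 0 < 1 - A := sub_pos.2 hA₁
  calc A / (1 - A) * (M + U / S * (E / 4))
      = A / (S * (1 - A)) * (S * M + 1 / 4 * (U * E)) := by field_simp
    _ ≤ A / (S * (1 - A)) * ((U + (3 * U + V) / 4) * M + 1 / 4 * (U * E)) := by gcongr
    _ = A / (S * (1 - A)) * (U * M + 1 / 4 * ((3 * U + V) * M + U * E)) := by ring

theorem stmt_14_general {N : ℕ} {x y d u v α : ℕ → ℝ} {Φ Ψ C : ℝ → ℝ} {ε A Y D U V S H : ℝ}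
    (hN : 1 < N) (hΨ : IsRationalCubicFIF N x y d u v α Ψ)
    (hΨ_bdd : BddAbove ((fun t => |Ψ t|) '' Set.Icc (x 1) (x N)))
    (hC : IsRationalCubicFIF N x y d u v 0 C)
    (hΦ : ∀ t ∈ Set.Icc (x 1) (x N), |Φ t - C t| ≤ ε)
    (hu : ∀ i, 1 ≤ i → i < N → 0 < u i) (hv : ∀ i, 1 ≤ i → i < N → 0 ≤ v i)
    (hα : ∀ i, 1 ≤ i → i < N → |α i| < 1)
    (hY : IsGreatest {z : ℝ | ∃ i, 1 ≤ i ∧ i ≤ N ∧ z = |y i|} Y)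
    (hD : IsGreatest {z : ℝ | ∃ i, 1 ≤ i ∧ i ≤ N ∧ z = |d i|} D)
    (hU : IsGreatest {z : ℝ | ∃ i, 1 ≤ i ∧ i < N ∧ z = u i} U)
    (hV : IsGreatest {z : ℝ | ∃ i, 1 ≤ i ∧ i < N ∧ z = v i} V)
    (hA : IsGreatest {z : ℝ | ∃ i, 1 ≤ i ∧ i < N ∧ z = |α i|} A)
    (hH : IsGreatest {z : ℝ | ∃ i, 1 ≤ i ∧ i < N ∧ z = x (i + 1) - x i} H)
    (hS : IsLeast {z : ℝ | ∃ i, 1 ≤ i ∧ i < N ∧ z = u i + v i / 4} S)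
    {t : ℝ} (ht : t ∈ Set.Icc (x 1) (x N)) :
    |Φ t - Ψ t| ≤ ε + A / (S * (1 - A)) *
      (U * (Y + max |y 1| |y N|) + 1 / 4 * ((3 * U + V) * (Y + max |y 1| |y N|)
        + U * (H * D + (x N - x 1) * max |d 1| |d N|))) := by
  have hA₁ : A < 1 := by
    obtain ⟨i, hi, hiN, rfl⟩ := hA.1
    exact hα i hi hiN
  have hS₀ : 0 < S := by
    obtain ⟨i, hi, hiN, rfl⟩ := hS.1
    linarith [hu i hi hiN, hv i hi hiN]
  have hΨC := hΨ.abs_sub_classical_le hN hΨ_bdd hC hu hv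
    (fun i hi hiN => hA.2 ⟨i, hi, hiN, rfl⟩) hA₁
    (fun i hi hiN => hY.2 ⟨i, hi, hiN, rfl⟩) (fun i hi hiN => hD.2 ⟨i, hi, hiN, rfl⟩)
    (fun i hi hiN => hU.2 ⟨i, hi, hiN, rfl⟩) (fun i hi hiN => hH.2 ⟨i, hi, hiN, rfl⟩)
    hS₀ (fun i hi hiN => hS.2 ⟨i, hi, hiN, rfl⟩) ht
  have hSU : S ≤ U + (3 * U + V) / 4 := by
    linarith [hu 1 le_rfl hN, hS.2 ⟨1, le_rfl, hN, rfl⟩, hU.2 ⟨1, le_rfl, hN, rfl⟩,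
      hV.2 ⟨1, le_rfl, hN, rfl⟩]
  have hM₀ : 0 ≤ Y + max |y 1| |y N| :=
    add_nonneg ((abs_nonneg _).trans (hY.2 ⟨1, le_rfl, hN.le, rfl⟩))
      (le_max_of_le_left (abs_nonneg _))
  have hA₀ : 0 ≤ A := (abs_nonneg _).trans (hA.2 ⟨1, le_rfl, hN, rfl⟩)
  calc |Φ t - Ψ t| ≤ |Φ t - C t| + |C t - Ψ t| := abs_sub_le _ _ _
    _ ≤ _ := add_le_add (hΦ t ht) ?_
  rw [abs_sub_comm]
  exact hΨC.trans (div_mul_add_div_mul_le hA₀ hA₁ hS₀ hSU hM₀)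

/-- Error bound `‖Φ − Ψ‖_∞ ≤ (1/2)‖Φ⁽³⁾‖_∞ h³ c + fractal-perturbation term`
for the RCSFIF `Ψ` of a `C³` original function `Φ`, given the classical error bound
for the classical rational cubic interpolant `C`. -/
theorem stmt_14
    (N : ℕ) (hN : 2 < N)
    (x y d : ℕ → ℝ)
    (hx : ∀ i, 1 ≤ i → i < N → x i < x (i + 1))
    (a : ℕ → ℝ) (ha : ∀ i, a i = (x (i + 1) - x i) / (x N - x 1))
    (L : ℕ → ℝ → ℝ)
    (hL : ∀ i, 1 ≤ i → i < N → ∀ t : ℝ, L i t =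
      a i * t + (x N * x i - x 1 * x (i + 1)) / (x N - x 1))
    (Φ : ℝ → ℝ)
    (hΦ : ContDiffOn ℝ 3 Φ (Set.Icc (x 1) (x N)))
    (hy : ∀ i, 1 ≤ i → i ≤ N → y i = Φ (x i))
    (hd : ∀ i, 1 ≤ i → i ≤ N → d i = derivWithin Φ (Set.Icc (x 1) (x N)) (x i))
    (α u v : ℕ → ℝ) (κ : ℝ)
    (hκ0 : 0 ≤ κ) (hκ1 : κ < 1)
    (hα : ∀ i, 1 ≤ i → i < N → |α i| ≤ κ * a i)
    (hu : ∀ i, 1 ≤ i → i < N → 0 < u i)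
    (hv : ∀ i, 1 ≤ i → i < N → 0 ≤ v i)
    (U V W Z : ℕ → ℝ)
    (hU : ∀ i, U i = u i * (y i - α i * y 1))
    (hV : ∀ i, V i = (3 * u i + v i) * (y i - α i * y 1)
      + u i * (x (i + 1) - x i) * d i - α i * u i * (x N - x 1) * d 1)
    (hW : ∀ i, W i = (3 * u i + v i) * (y (i + 1) - α i * y N)
      - u i * (x (i + 1) - x i) * d (i + 1) + α i * u i * (x N - x 1) * d N)
    (hZ : ∀ i, Z i = u i * (y (i + 1) - α i * y N))
    (q : ℕ → ℝ → ℝ)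
    (hq : ∀ (i : ℕ) (t θ : ℝ), θ = (t - x 1) / (x N - x 1) →
      q i t = (U i * (1 - θ) ^ 3 + V i * θ * (1 - θ) ^ 2
        + W i * θ ^ 2 * (1 - θ) + Z i * θ ^ 3) / (u i + v i * θ * (1 - θ)))
    (Ψ : ℝ → ℝ)
    (hΨc : ContinuousOn Ψ (Set.Icc (x 1) (x N)))
    (hΨ : ∀ i, 1 ≤ i → i < N → ∀ t ∈ Set.Icc (x 1) (x N),
      Ψ (L i t) = α i * Ψ t + q i t)
    (C : ℝ → ℝ)
    (hC : ∀ (i : ℕ), 1 ≤ i → i < N → ∀ t ∈ Set.Icc (x i) (x (i + 1)),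
      ∀ υ : ℝ, υ = (t - x i) / (x (i + 1) - x i) →
      C t = (u i * y i * (1 - υ) ^ 3
        + ((3 * u i + v i) * y i + u i * (x (i + 1) - x i) * d i) * υ * (1 - υ) ^ 2
        + ((3 * u i + v i) * y (i + 1)
            - u i * (x (i + 1) - x i) * d (i + 1)) * υ ^ 2 * (1 - υ)
        + u i * y (i + 1) * υ ^ 3) / (u i + v i * υ * (1 - υ)))
    -- the constants in the classical error bound
    (cc : ℕ → ℝ) (hcc : ∀ i, 1 ≤ i → i < N → 0 ≤ cc i)
    (Phi3 HC Cmax : ℝ)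
    (hPhi3 : IsGreatest
      {z : ℝ | ∃ t ∈ Set.Icc (x 1) (x N),
        z = |iteratedDerivWithin 3 Φ (Set.Icc (x 1) (x N)) t|} Phi3)
    (hHC : IsGreatest {z : ℝ | ∃ i, 1 ≤ i ∧ i < N ∧ z = (x (i + 1) - x i) ^ 3 * cc i} HC)
    (hCmax : IsGreatest {z : ℝ | ∃ i, 1 ≤ i ∧ i < N ∧ z = cc i} Cmax)
    (hclassical : ∀ t ∈ Set.Icc (x 1) (x N), |Φ t - C t| ≤ (1 / 2) * Phi3 * HC)
    (Ynorm Dnorm Unorm Vnorm Anorm H S M : ℝ)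
    (hYn : IsGreatest {z : ℝ | ∃ i, 1 ≤ i ∧ i ≤ N ∧ z = |y i|} Ynorm)
    (hDn : IsGreatest {z : ℝ | ∃ i, 1 ≤ i ∧ i ≤ N ∧ z = |d i|} Dnorm)
    (hUn : IsGreatest {z : ℝ | ∃ i, 1 ≤ i ∧ i < N ∧ z = u i} Unorm)
    (hVn : IsGreatest {z : ℝ | ∃ i, 1 ≤ i ∧ i < N ∧ z = v i} Vnorm)
    (hAn : IsGreatest {z : ℝ | ∃ i, 1 ≤ i ∧ i < N ∧ z = |α i|} Anorm)
    (hH : IsGreatest {z : ℝ | ∃ i, 1 ≤ i ∧ i < N ∧ z = x (i + 1) - x i} H)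
    (hS : IsLeast {z : ℝ | ∃ i, 1 ≤ i ∧ i < N ∧ z = u i + v i / 4} S)
    (hM : M = Ynorm + max |y 1| |y N|) :
    ∀ t ∈ Set.Icc (x 1) (x N),
      |Φ t - Ψ t| ≤ (1 / 2) * Phi3 * H ^ 3 * Cmax
        + (Anorm / (S * (1 - Anorm))) *
          (Unorm * M + (1 / 4) * ((3 * Unorm + Vnorm) * M
            + Unorm * (H * Dnorm + (x N - x 1) * max |d 1| |d N|))) := by
  have hx_mono : StrictMonoOn x (Set.Icc 1 N) :=
    strictMonoOn_of_lt_add_one Set.ordConnected_Icc fun i _ hi hi' => hx i hi.1 hi'.2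
  have hI : x 1 < x N := hx_mono ⟨le_rfl, by omega⟩ ⟨by omega, le_rfl⟩ (by omega)
  have hα_lt i hi hiN : |α i| < 1 :=
    lt_one_of_le_mul_div hx_mono.monotoneOn hi hiN hκ0 hκ1 (ha i ▸ hα i hi hiN)
  have hPhi3₀ : 0 ≤ Phi3 := by obtain ⟨t, -, rfl⟩ := hPhi3.1; exact abs_nonneg _
  have hHC_le : HC ≤ H ^ 3 * Cmax :=
    le_pow_mul_of_exists_eq (fun i hi hiN => (sub_pos.2 (hx i hi hiN)).le) hcc hHC.1
      (fun i hi hiN => hH.2 ⟨i, hi, hiN, rfl⟩) (fun i hi hiN => hCmax.2 ⟨i, hi, hiN, rfl⟩)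
  have hclassical_le t ht : |Φ t - C t| ≤ 1 / 2 * Phi3 * H ^ 3 * Cmax :=
    (hclassical t ht).trans (by rw [mul_assoc _ (H ^ 3)]; gcongr)
  have hΨ_FIF : IsRationalCubicFIF N x y d u v α Ψ :=
    isRationalCubicFIF_of_forall_mem_Icc hI fun i hi hiN t ht => by
      rw [← ha, ← hL i hi hiN, hΨ i hi hiN t ht, hq i t _ rfl, hU, hV, hW, hZ, rationalCubic]
      ring
  have hC_FIF : IsRationalCubicFIF N x y d u v 0 C :=
    isRationalCubicFIF_zero_of_forall_mem_Icc hx fun i hi hiN t ht => by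
      rw [hC i hi hiN t ht _ rfl, rationalCubic]
      ring
  subst hM
  exact fun t => stmt_14_general (by omega) hΨ_FIF (isCompact_Icc.bddAbove_image hΨc.abs) hC_FIF
    hclassical_le hu hv hα_lt hYn hDn hUn hVn hAn hH hS
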